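/- arXiv:1803.10955 — 6 statements merged into one kernel-verified Lean document; each statement's English description precedes it below -/
import Mathlib

section
/- Let G be a finite group acting faithfully and transitively on a finite set Ω, let c ≥ 1 be an integer, and let x_1, …, x_k be representatives of the distinct conjugacy classes of elements of prime order in G. Let Q(G,c) be the proportion of c-tuples (ω_1, …, ω_c) ∈ Ω^c whose pointwise stabilizer in G is nontrivial (i.e. the probability that a randomly chosen c-tuple of points of Ω is not a base for G). Then Q(G,c) ≤ Σ_{i=1}^k |x_i^G| · fpr(x_i)^c, where fpr(x) = |Fix_Ω(x)|/|Ω| and Fix_Ω(x) = {ω ∈ Ω : x·ω = ω}. -/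
/-!
A tuple with nontrivial pointwise stabilizer is fixed by some element of prime order, since a
nontrivial element of the stabilizer has a power of prime order (`exists_prime_order_fixing`).
Hence the non-bases are covered by the sets `Fix(g) ^ c` with `g` running over the elements of
prime order, and it remains to take the union bound. Grouping the `g` by conjugacy class and
identifying `Fix(g)` with `Fix(x i)` through a conjugating element gives the count
`∑ i, |x_i^G| * |Fix(x i)| ^ c` (`card_nonbase_le`); dividing by `|Ω| ^ c` gives the result.
-/

/-- A nontrivial element of a finite group has a power of prime order, which still fixes every
point of a tuple that the element fixes. -/
lemma exists_prime_order_fixing {G Ω ι : Type*} [Group G] [Finite G] [MulAction G Ω]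
    (t : ι → Ω) (g : G) (hg : g ≠ 1) (hfix : ∀ j, g • t j = t j) :
    ∃ y : G, (orderOf y).Prime ∧ ∀ j, y • t j = t j := by
  have hne : orderOf g ≠ 1 := fun h => hg (orderOf_eq_one_iff.mp h)
  refine ⟨g ^ (orderOf g / (orderOf g).minFac), ?_, fun j => ?_⟩
  · rw [orderOf_pow_orderOf_div (orderOf_pos g).ne' (Nat.minFac_dvd _)]
    exact Nat.minFac_prime hne
  · exact (MulAction.stabilizer G (t j)).pow_mem (hfix j) _

/-- The union bound in integer form. The right-hand side counts triples `(i, g, s)` with `g`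
conjugate to `x i` and `s` a tuple of fixed points of `x i`; translating `s` by a chosen element
conjugating `x i` to `g` maps these triples onto the non-bases. -/
lemma card_nonbase_le {G Ω : Type*} [Group G] [Finite G] [Finite Ω] [MulAction G Ω]
    (c k : ℕ) (x : Fin k → G) (hprime : ∀ i, (orderOf (x i)).Prime)
    (hrep : ∀ g : G, (orderOf g).Prime → ∃ i, IsConj (x i) g) :
    Nat.card {t : Fin c → Ω // ∃ g : G, g ≠ 1 ∧ ∀ j, g • t j = t j} ≤
      ∑ i : Fin k, Nat.card {g : G // IsConj (x i) g} *
        Nat.card (MulAction.fixedBy Ω (x i)) ^ c := by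
  have hconj : ∀ (i : Fin k) (g : {g : G // IsConj (x i) g}),
      ∃ h : G, h * x i * h⁻¹ = g := fun i g => isConj_iff.mp g.2
  choose h hh using hconj
  have hfix : ∀ (i : Fin k) (g : {g : G // IsConj (x i) g}) (ω : Ω),
      (g : G) • ω = ω ↔ x i • (h i g)⁻¹ • ω = (h i g)⁻¹ • ω := by
    intro i g ω
    rw [← hh i g, mul_smul, mul_smul, smul_eq_iff_eq_inv_smul]
  have hne : ∀ (i : Fin k) (g : {g : G // IsConj (x i) g}), (g : G) ≠ 1 := by
    intro i g hg
    have hc : IsConj (x i) 1 := hg ▸ g.2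
    apply (hprime i).ne_one
    rw [isConj_one_left.mp hc, orderOf_one]
  let F : (Σ i : Fin k, {g : G // IsConj (x i) g} × (Fin c → MulAction.fixedBy Ω (x i))) →
      {t : Fin c → Ω // ∃ g : G, g ≠ 1 ∧ ∀ j, g • t j = t j} := fun p =>
    ⟨fun j => h p.1 p.2.1 • (p.2.2 j : Ω), p.2.1, hne _ _, fun j => by
      rw [hfix, inv_smul_smul]
      exact (p.2.2 j).2⟩
  have hF : Function.Surjective F := by
    rintro ⟨t, g, hg, hgt⟩
    obtain ⟨y, hy, hyt⟩ := exists_prime_order_fixing t g hg hgt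
    obtain ⟨i, hi⟩ := hrep y hy
    refine ⟨⟨i, ⟨y, hi⟩, fun j => ⟨(h i ⟨y, hi⟩)⁻¹ • t j, (hfix i ⟨y, hi⟩ _).mp (hyt j)⟩⟩, ?_⟩
    ext j
    exact smul_inv_smul _ _
  refine (Nat.card_le_card_of_surjective F hF).trans_eq ?_
  simp [Nat.card_sigma, Nat.card_prod, Nat.card_fun]

/-- Let `G` be a finite group acting faithfully and transitively on a finite set `Ω`,
let `c ≥ 1`, and let `x 1, …, x k` be representatives of the distinct conjugacy classes
of elements of prime order in `G`. Then the proportion of `c`-tuples of points of `Ω`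
whose pointwise stabilizer is nontrivial (i.e. which are not bases) is at most
`Σ_i |x_i^G| · fpr(x_i)^c`, where `fpr(x) = |Fix_Ω(x)| / |Ω|`. -/
theorem stmt1 {G Ω : Type*} [Group G] [Fintype G] [Fintype Ω] [MulAction G Ω]
    [FaithfulSMul G Ω] (htrans : MulAction.IsPretransitive G Ω)
    (c : ℕ) (hc : 1 ≤ c) (k : ℕ) (x : Fin k → G)
    (hprime : ∀ i, (orderOf (x i)).Prime)
    (hdist : ∀ i j : Fin k, i ≠ j → ¬ IsConj (x i) (x j))
    (hrep : ∀ g : G, (orderOf g).Prime → ∃ i, IsConj (x i) g) :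
    (Nat.card {t : Fin c → Ω // ∃ g : G, g ≠ 1 ∧ ∀ j, g • t j = t j} : ℝ) /
        (Nat.card Ω : ℝ) ^ c
      ≤ ∑ i : Fin k, (Nat.card {g : G // IsConj (x i) g} : ℝ) *
          ((Nat.card (MulAction.fixedBy Ω (x i)) : ℝ) / (Nat.card Ω : ℝ)) ^ c := by
  have key : (Nat.card {t : Fin c → Ω // ∃ g : G, g ≠ 1 ∧ ∀ j, g • t j = t j} : ℝ) ≤
      ∑ i : Fin k, (Nat.card {g : G // IsConj (x i) g} : ℝ) *
        (Nat.card (MulAction.fixedBy Ω (x i)) : ℝ) ^ c := by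
    exact_mod_cast card_nonbase_le (Ω := Ω) c k x hprime hrep
  refine (div_le_div_of_nonneg_right key (by positivity)).trans_eq ?_
  rw [Finset.sum_div]
  exact Finset.sum_congr rfl fun i _ => by rw [div_pow, mul_div_assoc]
end

section
/- Let G be a finite group acting faithfully on a finite set Ω and let c ≥ 1 be an integer. If Σ_{x ∈ G, x of prime order} |Fix_Ω(x)|^c < |Ω|^c (the sum running over all elements of G whose order is a prime number), then G admits a base of size c; that is, there exist points ω_1, …, ω_c ∈ Ω such that the only element g ∈ G with g·ω_j = ω_j for all j = 1, …, c is the identity. -/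
/-!
A union bound over `Ω^c`. If no `c`-tuple is a base, each tuple is fixed by some `g ≠ 1`, hence by
a power of `g` of prime order (`exists_pow_orderOf_prime`). So `Ω^c` is covered by the sets
`Fix(x)^c` with `x` of prime order, and `|Ω|^c ≤ Σ |Fix(x)|^c`.
-/

theorem exists_pow_orderOf_prime {G : Type*} [Group G] [Finite G] {g : G} (hg : g ≠ 1) :
    ∃ n : ℕ, (orderOf (g ^ n)).Prime := by
  obtain ⟨p, hp, hpd⟩ := Nat.exists_prime_and_dvd (mt orderOf_eq_one_iff.mp hg)
  refine ⟨orderOf g / p, ?_⟩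
  rwa [orderOf_pow_orderOf_div (orderOf_pos g).ne' hpd]

/-- Let `G` be a finite group acting faithfully on a finite set `Ω` and `c ≥ 1`.
If `Σ_{x ∈ G of prime order} |Fix_Ω(x)|^c < |Ω|^c`, then `G` admits a base of size `c`:
there are points `ω 1, …, ω c` such that the only `g ∈ G` fixing all of them is `1`. -/
theorem stmt2 {G Ω : Type*} [Group G] [Fintype G] [Fintype Ω] [MulAction G Ω]
    [FaithfulSMul G Ω] (c : ℕ) (hc : 1 ≤ c)
    (h : ∑ x ∈ Finset.univ.filter (fun x : G => (orderOf x).Prime),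
          (Nat.card (MulAction.fixedBy Ω x)) ^ c < (Nat.card Ω) ^ c) :
    ∃ ω : Fin c → Ω, ∀ g : G, (∀ j, g • ω j = ω j) → g = 1 := by
  classical
  by_contra! hcon
  refine absurd h (not_lt.mpr ?_)
  have hcover : (Finset.univ : Finset (Fin c → Ω)) ⊆
      (Finset.univ.filter (fun x : G => (orderOf x).Prime)).biUnion
        (fun x => Fintype.piFinset fun _ => (MulAction.fixedBy Ω x).toFinset) := by
    intro ω _
    obtain ⟨g, hfix, hg⟩ := hcon ω
    obtain ⟨n, hn⟩ := exists_pow_orderOf_prime hg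
    simp only [Finset.mem_biUnion, Finset.mem_filter, Finset.mem_univ, true_and,
      Fintype.mem_piFinset, Set.mem_toFinset]
    exact ⟨g ^ n, hn, fun j =>
      (MulAction.stabilizer G (ω j)).pow_mem (MulAction.mem_stabilizer_iff.mpr (hfix j)) n⟩
  calc Nat.card Ω ^ c = (Finset.univ : Finset (Fin c → Ω)).card := by simp
    _ ≤ _ := (Finset.card_le_card hcover).trans Finset.card_biUnion_le
    _ = _ := Finset.sum_congr rfl fun x _ => by
      rw [Fintype.card_piFinset_const, Set.toFinset_card, Nat.card_eq_fintype_card]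
end

section
/- Let F be a field with at least 3 elements and let V be an F-vector space of finite dimension n ≥ 2. Then for every choice of n one-dimensional subspaces L_1, …, L_n of V there exists a non-scalar g ∈ GL(V) (i.e. g is not of the form λ·id_V for any λ ∈ F) with g(L_i) = L_i for all i = 1, …, n. (Consequently, no n points of the projective space of V form a base for PGL(V), so together with the existence of n+1 such points the base size of PGL_n(q) in its natural action on the points of the projective space is n+1 for q ≥ 3.) -/
/-!
The lines `L i` with `i ≠ 0` span a proper subspace, so some nonzero functional `f` vanishes on
all of them. Choose `u` with `f u = 1`, taking `u ∈ L 0` when `f` does not vanish on `L 0`. For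
`a ≠ 0, 1` the homology `x ↦ x + (a - 1) f(x) u` is the identity on `ker f` and multiplies `u`
by `a`. Hence it preserves every `L i`, and it is not scalar since `ker f ≠ 0` in dimension
at least two.
-/

/-- Let `F` be a field with at least 3 elements (i.e. having an element `a ≠ 0, 1`)
and let `V` be an `F`-vector space of finite dimension `n ≥ 2`. Then for every choice
of `n` one-dimensional subspaces `L 1, …, L n` of `V` there exists a non-scalar
`g ∈ GL(V)` with `g (L i) = L i` for all `i`. -/
theorem stmt8 {F V : Type*} [Field F] [AddCommGroup V] [Module F V]
    [FiniteDimensional F V] (hF : ∃ a : F, a ≠ 0 ∧ a ≠ 1)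
    (n : ℕ) (hn : 2 ≤ n) (hdim : Module.finrank F V = n)
    (L : Fin n → Submodule F V) (hL : ∀ i, Module.finrank F (L i) = 1) :
    ∃ g : V ≃ₗ[F] V, (∀ i, Submodule.map (g : V →ₗ[F] V) (L i) = L i) ∧
      ¬ ∃ l : F, ∀ v : V, g v = l • v := by
  obtain ⟨a, ha0, ha1⟩ := hF
  have hv : ∀ i, ∃ v : V, L i = Submodule.span F {v} := by
    intro i
    obtain ⟨v, -, hv⟩ := finrank_eq_one_iff'.1 (hL i)
    refine ⟨v, le_antisymm (fun x hx => ?_) ?_⟩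
    · obtain ⟨c, hc⟩ := hv ⟨x, hx⟩
      exact Submodule.mem_span_singleton.2 ⟨c, congrArg Subtype.val hc⟩
    · simp
  choose v hv using hv
  obtain ⟨m, rfl⟩ : ∃ m, n = m + 1 := ⟨n - 1, by omega⟩
  have hW : Submodule.span F (Set.range fun i : Fin m => v i.succ) < ⊤ := by
    refine lt_top_iff_ne_top.2 fun h => ?_
    have h1 := finrank_range_le_card (R := F) fun i : Fin m => v i.succ
    rw [Set.finrank, h, finrank_top, hdim, Fintype.card_fin] at h1
    omega
  obtain ⟨f, hf0, hf⟩ := Submodule.exists_le_ker_of_lt_top _ hW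
  have hfs : ∀ i : Fin m, f (v i.succ) = 0 := fun i =>
    hf (Submodule.subset_span ⟨i, rfl⟩)
  have hu : ∃ u : V, f u = 1 ∧ (f (v 0) = 0 ∨ f (v 0) • u = v 0) := by
    by_cases h : f (v 0) = 0
    · obtain ⟨x, hx⟩ : ∃ x, f x ≠ 0 := by
        by_contra! hall
        exact hf0 (LinearMap.ext hall)
      exact ⟨(f x)⁻¹ • x, by simp [hx], Or.inl h⟩
    · exact ⟨(f (v 0))⁻¹ • v 0, by simp [h], Or.inr (by simp [smul_smul, h])⟩
  obtain ⟨u, hfu, hu0⟩ := hu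
  let T : F → V →ₗ[F] V := fun c => LinearMap.id + (c - 1) • f.smulRight u
  have hT : ∀ c x, T c x = x + ((c - 1) * f x) • u := fun c x => by simp [T, smul_smul]
  have hmul : ∀ c d : F, c * d = 1 → T c ∘ₗ T d = LinearMap.id := by
    intro c d hcd
    ext x
    simp only [LinearMap.comp_apply, hT, map_add, map_smul, hfu, LinearMap.id_apply, smul_eq_mul]
    rw [add_assoc, ← add_smul, add_eq_left]
    convert zero_smul F u using 2
    linear_combination f x * hcd
  have hker : ∀ x, f x = 0 → T a x = x := fun x hx => by simp [hT, hx]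
  have hTu : T a u = a • u := by
    rw [hT, hfu, mul_one, sub_smul, one_smul, add_sub_cancel]
  refine ⟨LinearEquiv.ofLinearMap (T a) (T a⁻¹) (hmul _ _ (mul_inv_cancel₀ ha0))
    (hmul _ _ (inv_mul_cancel₀ ha0)), fun i => ?_, ?_⟩
  · have key : T a (v i) = v i ∨ T a (v i) = a • v i := by
      refine Fin.cases ?_ (fun j => Or.inl (hker _ (hfs j))) i
      rcases hu0 with h | h
      · exact Or.inl (hker _ h)
      · right
        rw [← h, map_smul, hTu, smul_comm]
    rw [hv i, Submodule.map_span, Set.image_singleton]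
    change Submodule.span F {T a (v i)} = _
    rcases key with h | h
    · rw [h]
    · rw [h, Submodule.span_singleton_smul_eq (IsUnit.mk0 a ha0)]
  · rintro ⟨l, hl⟩
    replace hl : ∀ x, T a x = l • x := hl
    obtain ⟨w, hw, hw0⟩ : ∃ w ∈ LinearMap.ker f, w ≠ 0 := by
      refine Submodule.exists_mem_ne_zero_of_ne_bot (LinearMap.ker_ne_bot_of_finrank_lt ?_)
      rw [Module.finrank_self]
      omega
    have hu_ne : u ≠ 0 := by
      rintro rfl
      simp at hfu
    have h1 : l = 1 := smul_left_injective F hw0 (by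
      simp only [one_smul]
      rw [← hl, hker w hw])
    have h2 : a = l := smul_left_injective F hu_ne (by
      change a • u = l • u
      rw [← hl, hTu])
    exact ha1 (h2.trans h1)
end

section
/- Let A = {i ∈ Fin 8 : i < 4} (a 4-element subset of an 8-element set) and let H be the subgroup of the symmetric group Sym(Fin 8) consisting of all permutations σ with σ(A) = A or σ(A) = Aᶜ (so H is the stabilizer of the partition {A, Aᶜ} of Fin 8 into two 4-element subsets, isomorphic to the wreath product S_4 ≀ S_2, of order 1152). Then for all x_1, x_2, x_3 ∈ Sym(Fin 8), the intersection H ∩ x_1 H x_1^{-1} ∩ x_2 H x_2^{-1} ∩ x_3 H x_3^{-1} is a nontrivial subgroup. In particular, at least 5 conjugates of H are needed to obtain trivial intersection in S_8. -/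
/-!
A conjugate `x H x⁻¹` is the stabilizer of the bisection `{x(A), x(A)ᶜ}`, which is recorded by
the two-colouring `colour x` of `Fin 8`, each colour being used four times. Four conjugates give
four colourings, i.e. a map `c : Fin 8 → 𝔽₂⁴`, and a permutation `g` lies in the intersection as
soon as `c (g i) = c i + v` for a fixed vector `v`.

If `c` is not injective, a transposition of two points with the same image works, with `v = 0`.
If `c` is injective, its image `S` has eight elements and meets each of the eight coordinate
hyperplanes `x_j = ε` in exactly four points. A finite enumeration (`cube_translation`) shows that
every such `S` is invariant under translation by some `v ≠ 0`, and the permutation of `Fin 8`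
induced by this translation works.
-/

/-- The Boolean function on the 4-cube with the given table of values; `a` lists the values where
the first coordinate is `true`, `b` those where it is `false`. -/
def table (a₀ a₁ a₂ a₃ a₄ a₅ a₆ a₇ b₀ b₁ b₂ b₃ b₄ b₅ b₆ b₇ : Bool) (w x y z : Bool) : Bool :=
  cond w
    (cond x (cond y (cond z a₀ a₁) (cond z a₂ a₃)) (cond y (cond z a₄ a₅) (cond z a₆ a₇)))
    (cond x (cond y (cond z b₀ b₁) (cond z b₂ b₃)) (cond y (cond z b₄ b₅) (cond z b₆ b₇)))

set_option synthInstance.maxHeartbeats 400000 in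
set_option synthInstance.maxSize 1000 in
set_option maxRecDepth 10000 in
/-- The enumeration behind `cube_translation`. The two halves of the cube are filled one after
the other, so that only `70 · 256` of the `2 ^ 16` tables are examined. -/
lemma table_translation : ∀ a₀ a₁ a₂ a₃ a₄ a₅ a₆ a₇ : Bool,
    a₀.toNat + a₁.toNat + a₂.toNat + a₃.toNat + a₄.toNat + a₅.toNat + a₆.toNat + a₇.toNat = 4 →
    ∀ b₀ b₁ b₂ b₃ b₄ b₅ b₆ b₇ : Bool,
    b₀.toNat + b₁.toNat + b₂.toNat + b₃.toNat + b₄.toNat + b₅.toNat + b₆.toNat + b₇.toNat = 4 →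
    a₀.toNat + a₁.toNat + a₂.toNat + a₃.toNat + b₀.toNat + b₁.toNat + b₂.toNat + b₃.toNat = 4 →
    a₀.toNat + a₁.toNat + a₄.toNat + a₅.toNat + b₀.toNat + b₁.toNat + b₄.toNat + b₅.toNat = 4 →
    a₀.toNat + a₂.toNat + a₄.toNat + a₆.toNat + b₀.toNat + b₂.toNat + b₄.toNat + b₆.toNat = 4 →
    ∃ t u v s : Bool, (t || u || v || s) = true ∧ ∀ w x y z : Bool,
      table a₀ a₁ a₂ a₃ a₄ a₅ a₆ a₇ b₀ b₁ b₂ b₃ b₄ b₅ b₆ b₇ w x y z =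
      table a₀ a₁ a₂ a₃ a₄ a₅ a₆ a₇ b₀ b₁ b₂ b₃ b₄ b₅ b₆ b₇
        (w ^^ t) (x ^^ u) (y ^^ v) (z ^^ s) := by
  decide +kernel

/-- The 4-cube `𝔽₂⁴`. -/
abbrev Cube := Bool × Bool × Bool × Bool

/-- Addition in `𝔽₂⁴`. -/
def shift (v x : Cube) : Cube :=
  (x.1 ^^ v.1, x.2.1 ^^ v.2.1, x.2.2.1 ^^ v.2.2.1, x.2.2.2 ^^ v.2.2.2)

lemma shift_shift (v x : Cube) : shift v (shift v x) = x := by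
  simp [shift]

lemma shift_ne (v x : Cube) (hv : (v.1 || v.2.1 || v.2.2.1 || v.2.2.2) = true) :
    shift v x ≠ x := by
  revert v x; decide

/-- An 8-element subset of the 4-cube meeting every coordinate hyperplane in four points is
invariant under a nonzero translation. The subset is given by its indicator function `p`. -/
lemma cube_translation (p : Cube → Bool)
    (h : ∑ x, (p x).toNat = 8)
    (h₀ : ∑ x : Cube, (if x.1 then (p x).toNat else 0) = 4)
    (h₁ : ∑ x : Cube, (if x.2.1 then (p x).toNat else 0) = 4)
    (h₂ : ∑ x : Cube, (if x.2.2.1 then (p x).toNat else 0) = 4)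
    (h₃ : ∑ x : Cube, (if x.2.2.2 then (p x).toNat else 0) = 4) :
    ∃ v : Cube, (v.1 || v.2.1 || v.2.2.1 || v.2.2.2) = true ∧ ∀ x, p x = p (shift v x) := by
  simp only [Fintype.sum_prod_type, Fintype.sum_bool, if_true, Bool.false_eq_true, if_false]
    at h h₀ h₁ h₂ h₃
  have hp : ∀ w x y z, p (w, x, y, z) = table
      (p (true, true, true, true)) (p (true, true, true, false))
      (p (true, true, false, true)) (p (true, true, false, false))
      (p (true, false, true, true)) (p (true, false, true, false))
      (p (true, false, false, true)) (p (true, false, false, false))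
      (p (false, true, true, true)) (p (false, true, true, false))
      (p (false, true, false, true)) (p (false, true, false, false))
      (p (false, false, true, true)) (p (false, false, true, false))
      (p (false, false, false, true)) (p (false, false, false, false)) w x y z := by
    intro w x y z
    cases w <;> cases x <;> cases y <;> cases z <;> rfl
  obtain ⟨t, u, v, s, hv, hinv⟩ := table_translation
    (p (true, true, true, true)) (p (true, true, true, false))
    (p (true, true, false, true)) (p (true, true, false, false))
    (p (true, false, true, true)) (p (true, false, true, false))
    (p (true, false, false, true)) (p (true, false, false, false)) (by omega)
    (p (false, true, true, true)) (p (false, true, true, false))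
    (p (false, true, false, true)) (p (false, true, false, false))
    (p (false, false, true, true)) (p (false, false, true, false))
    (p (false, false, false, true)) (p (false, false, false, false))
    (by omega) (by omega) (by omega) (by omega)
  refine ⟨(t, u, v, s), hv, ?_⟩
  rintro ⟨w, x, y, z⟩
  simp only [shift]
  rw [hp w x y z, hp (w ^^ t)]
  exact hinv w x y z

/-- Counting the image of an injective `c` over the cube is counting over `Fin 8`. -/
lemma sum_indicator {c : Fin 8 → Cube} (hc : Function.Injective c) (B : Cube → Bool) :
    ∑ x : Cube, (if B x then (decide (∃ i, c i = x)).toNat else 0) =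
      (Finset.univ.filter fun i => B (c i) = true).card := by
  rw [← Finset.card_image_of_injective _ hc, Finset.card_eq_sum_ones, ← Finset.sum_filter]
  simp only [Bool.toNat, Bool.cond_decide]
  rw [← Finset.sum_filter, Finset.filter_filter]
  refine Finset.sum_congr ?_ fun _ _ => rfl
  ext x
  simp only [Finset.mem_filter, Finset.mem_univ, true_and, Finset.mem_image]
  constructor
  · rintro ⟨hx, i, rfl⟩
    exact ⟨i, hx, rfl⟩
  · rintro ⟨i, hx, rfl⟩
    exact ⟨hx, i, rfl⟩

/-- Four balanced two-colourings of `Fin 8` admit a nontrivial permutation that preserves or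
swaps the colours of each of them. -/
lemma exists_perm (c : Fin 8 → Cube)
    (h₀ : (Finset.univ.filter fun i => (c i).1 = true).card = 4)
    (h₁ : (Finset.univ.filter fun i => (c i).2.1 = true).card = 4)
    (h₂ : (Finset.univ.filter fun i => (c i).2.2.1 = true).card = 4)
    (h₃ : (Finset.univ.filter fun i => (c i).2.2.2 = true).card = 4) :
    ∃ g : Equiv.Perm (Fin 8), g ≠ 1 ∧ ∃ v, ∀ i, c (g i) = shift v (c i) := by
  by_cases hc : Function.Injective c
  · obtain ⟨v, hv, hinv⟩ := cube_translation (fun x => decide (∃ i, c i = x))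
      (by simpa using sum_indicator hc fun _ => true)
      ((sum_indicator hc fun x => x.1).trans h₀)
      ((sum_indicator hc fun x => x.2.1).trans h₁)
      ((sum_indicator hc fun x => x.2.2.1).trans h₂)
      ((sum_indicator hc fun x => x.2.2.2).trans h₃)
    have hex : ∀ i, ∃ j, c j = shift v (c i) := fun i =>
      (decide_eq_decide.mp (hinv (c i))).mp ⟨i, rfl⟩
    choose f hf using hex
    have hinvol : Function.Involutive f := fun i => hc (by
      rw [hf, hf, shift_shift])
    refine ⟨hinvol.toPerm, fun h1 => ?_, v, hf⟩
    have h0 : f 0 = 0 := congrArg (fun g : Equiv.Perm (Fin 8) => g 0) h1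
    exact shift_ne v (c 0) hv (by rw [← hf, h0])
  · simp only [Function.Injective, not_forall] at hc
    obtain ⟨i, j, hij, hne⟩ := hc
    refine ⟨Equiv.swap i j, fun h => hne (Equiv.swap_eq_one_iff.mp h),
      (false, false, false, false), fun k => ?_⟩
    have htr : shift (false, false, false, false) (c k) = c k := by simp [shift]
    rw [htr]
    by_cases hki : k = i
    · rw [hki, Equiv.swap_apply_left, hij]
    by_cases hkj : k = j
    · rw [hkj, Equiv.swap_apply_right, hij]
    rw [Equiv.swap_apply_of_ne_of_ne hki hkj]

/-- The two-colouring of `Fin 8` whose `true` class is `x(A)`, where `A = {0, 1, 2, 3}`. -/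
def colour (x : Equiv.Perm (Fin 8)) (i : Fin 8) : Bool := decide (((x⁻¹ i : Fin 8) : ℕ) < 4)

lemma card_colour (x : Equiv.Perm (Fin 8)) :
    (Finset.univ.filter fun i => colour x i = true).card = 4 := by
  have h : (Finset.univ.filter fun i : Fin 8 => (i : ℕ) < 4).card = 4 := by decide
  rw [← h]
  exact Finset.card_equiv x⁻¹ (by simp [colour])

lemma mem_conj_of_colour (H : Subgroup (Equiv.Perm (Fin 8)))
    (hH : ∀ σ : Equiv.Perm (Fin 8), σ ∈ H ↔
      (⇑σ '' {i : Fin 8 | (i : ℕ) < 4} = {i : Fin 8 | (i : ℕ) < 4} ∨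
        ⇑σ '' {i : Fin 8 | (i : ℕ) < 4} = {i : Fin 8 | (i : ℕ) < 4}ᶜ))
    (x g : Equiv.Perm (Fin 8)) (b : Bool) (hg : ∀ i, colour x (g i) = (colour x i ^^ b)) :
    g ∈ Subgroup.map (MulAut.conj x).toMonoidHom H := by
  refine ⟨x⁻¹ * g * x, (hH _).mpr ?_, by simp [mul_assoc]⟩
  have key : ∀ j : Fin 8, decide ((j : ℕ) < 4) =
      (decide ((((x⁻¹ * g * x)⁻¹ j : Fin 8) : ℕ) < 4) ^^ b) := by
    intro j
    have := hg (g⁻¹ (x j))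
    simpa [colour, mul_assoc] using this
  cases b
  · left
    ext j
    rw [Equiv.image_eq_preimage_symm]
    have := key j
    simp only [Bool.xor_false, decide_eq_decide] at this
    exact this.symm
  · right
    ext j
    rw [Equiv.image_eq_preimage_symm]
    have := key j
    rw [Bool.xor_true, ← decide_not, decide_eq_decide] at this
    rw [Set.mem_compl_iff, Set.mem_ofPred_eq, this, not_not]
    rfl

/-- Let `A = {i ∈ Fin 8 : i < 4}` and let `H` be the subgroup of `Sym(Fin 8)` of all
permutations `σ` with `σ(A) = A` or `σ(A) = Aᶜ` (the stabilizer of the partition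
`{A, Aᶜ}`, isomorphic to `S₄ ≀ S₂`). Then for all `x₁, x₂, x₃ ∈ Sym(Fin 8)` the
intersection `H ∩ x₁Hx₁⁻¹ ∩ x₂Hx₂⁻¹ ∩ x₃Hx₃⁻¹` is nontrivial; in particular at
least 5 conjugates of `H` are needed to obtain trivial intersection in `S₈`. -/
theorem stmt10 (H : Subgroup (Equiv.Perm (Fin 8)))
    (hH : ∀ σ : Equiv.Perm (Fin 8), σ ∈ H ↔
      (⇑σ '' {i : Fin 8 | (i : ℕ) < 4} = {i : Fin 8 | (i : ℕ) < 4} ∨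
        ⇑σ '' {i : Fin 8 | (i : ℕ) < 4} = {i : Fin 8 | (i : ℕ) < 4}ᶜ))
    (x₁ x₂ x₃ : Equiv.Perm (Fin 8)) :
    ∃ g : Equiv.Perm (Fin 8), g ≠ 1 ∧
      g ∈ H ⊓ Subgroup.map (MulAut.conj x₁).toMonoidHom H ⊓
        Subgroup.map (MulAut.conj x₂).toMonoidHom H ⊓
          Subgroup.map (MulAut.conj x₃).toMonoidHom H := by
  obtain ⟨g, hg, v, hv⟩ := exists_perm
    (fun i => (colour 1 i, colour x₁ i, colour x₂ i, colour x₃ i))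
    (card_colour 1) (card_colour x₁) (card_colour x₂) (card_colour x₃)
  simp only [shift, Prod.mk.injEq] at hv
  have hm := mem_conj_of_colour H hH
  have h1 : g ∈ H := by
    simpa using hm 1 g v.1 fun i => (hv i).1
  exact ⟨g, hg, ⟨⟨h1, hm x₁ g _ fun i => (hv i).2.1⟩, hm x₂ g _ fun i => (hv i).2.2.1⟩,
    hm x₃ g _ fun i => (hv i).2.2.2⟩
end

section
/- Let F be a finite field of characteristic 2 with |F| = q. Then the number of elements of order 2 in the special linear group SL_2(F) (i.e. the number of matrices x ∈ SL_2(F) with x ≠ 1 and x² = 1) equals q² − 1. -/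
/-!
In characteristic 2, Cayley–Hamilton for `x ∈ SL₂(F)` reads `x² = tr(x) x + 1`, so `x² = 1` exactly
when the trace vanishes, i.e. when the two diagonal entries agree (`sq_eq_one_iff_diag`). Such an
`x` has diagonal entry `a` with `a² = 1 + bc`, where `b`, `c` are the off-diagonal entries. Squaring
is bijective on a finite field of characteristic 2, so `x ↦ (b, c)` is a bijection from the
solutions of `x² = 1` onto `F × F`, and it sends `1` to `(0, 0)`. Removing that point leaves
`q² - 1` elements.
-/

/-- In characteristic 2, `x² = 1` in `SL₂` means that `x` has trace zero. -/
theorem sq_eq_one_iff_diag {F : Type*} [Field F] [CharP F 2]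
    (x : Matrix.SpecialLinearGroup (Fin 2) F) : x ^ 2 = 1 ↔ x 0 0 = x 1 1 := by
  have hdet := x.det_coe
  rw [Matrix.det_fin_two] at hdet
  have h2 : (2 : F) = 0 := CharTwo.two_eq_zero
  constructor
  · intro h
    have e : ∀ i j, (x ^ 2) i j = (1 : Matrix.SpecialLinearGroup (Fin 2) F) i j := by simp [h]
    have e00 := e 0 0
    have e11 := e 1 1
    simp [pow_two, Matrix.mul_apply, Fin.sum_univ_two] at e00 e11
    -- Adding the diagonal entries of `x² = 1` gives `(a - d)² = 0` modulo 2.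
    have ht : (x 0 0 - x 1 1) ^ 2 = 0 := by
      linear_combination e00 + e11 + (1 - x 0 1 * x 1 0 - x 0 0 * x 1 1) * h2
    exact sub_eq_zero.mp (pow_eq_zero_iff two_ne_zero |>.mp ht)
  · intro h
    ext i j
    fin_cases i <;> fin_cases j <;>
      simp [pow_two, Matrix.mul_apply, Fin.sum_univ_two]
    · linear_combination hdet + x 0 0 * h + x 0 1 * x 1 0 * h2
    · linear_combination x 0 1 * h + x 0 1 * x 1 1 * h2
    · linear_combination x 1 0 * h + x 1 0 * x 1 1 * h2
    · linear_combination hdet - x 1 1 * h + x 0 1 * x 1 0 * h2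

/-- Let `F` be a finite field of characteristic 2 with `|F| = q`. Then the number of
elements of order 2 in `SL₂(F)` (matrices `x ≠ 1` with `x² = 1`) equals `q² - 1`. -/
theorem stmt11 {F : Type*} [Field F] [Fintype F] (hchar : CharP F 2)
    (q : ℕ) (hq : Fintype.card F = q) :
    Nat.card {x : Matrix.SpecialLinearGroup (Fin 2) F // x ≠ 1 ∧ x ^ 2 = 1} =
      q ^ 2 - 1 := by
  classical
  have h2 : (2 : F) = 0 := CharTwo.two_eq_zero
  -- A solution of `x² = 1` is determined by its off-diagonal entries.
  have key : ∀ x y : Matrix.SpecialLinearGroup (Fin 2) F, x ^ 2 = 1 → y ^ 2 = 1 →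
      x 0 1 = y 0 1 → x 1 0 = y 1 0 → x = y := by
    intro x y hx hy h01 h10
    rw [sq_eq_one_iff_diag] at hx hy
    have dx := x.det_coe
    have dy := y.det_coe
    rw [Matrix.det_fin_two, ← hx] at dx
    rw [Matrix.det_fin_two, ← hy, ← h01, ← h10] at dy
    have h00 : x 0 0 = y 0 0 := by
      have : (x 0 0 - y 0 0) ^ 2 = 0 := by
        linear_combination dx - dy + (y 0 0 ^ 2 - x 0 0 * y 0 0) * h2
      exact sub_eq_zero.mp (pow_eq_zero_iff two_ne_zero |>.mp this)
    ext i j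
    fin_cases i <;> fin_cases j
    · exact h00
    · exact h01
    · exact h10
    · exact hx.symm.trans (h00.trans hy)
  have hcard : Nat.card {p : F × F // p ≠ 0} = q ^ 2 - 1 := by
    rw [Nat.card_eq_fintype_card, Fintype.card_subtype_compl, Fintype.card_prod, hq,
      Fintype.card_subtype_eq, pow_two]
  rw [← hcard]
  refine Nat.card_eq_of_bijective
    (fun x => ⟨(x.1 0 1, x.1 1 0), fun h => x.2.1 (key x.1 1 x.2.2 (one_pow 2) ?_ ?_)⟩) ⟨?_, ?_⟩
  · simpa using congrArg Prod.fst h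
  · simpa using congrArg Prod.snd h
  · intro x y hxy
    have h := congrArg Subtype.val hxy
    exact Subtype.ext (key x.1 y.1 x.2.2 y.2.2 (congrArg Prod.fst h) (congrArg Prod.snd h))
  · rintro ⟨⟨b, c⟩, hbc⟩
    obtain ⟨a, ha⟩ := FiniteField.isSquare_of_char_two (CharP.ringChar_of_prime_eq_zero
      Nat.prime_two (by exact_mod_cast h2)) (1 + b * c)
    refine ⟨⟨⟨!![a, b; c, a], ?_⟩, ?_, ?_⟩, rfl⟩
    · rw [Matrix.det_fin_two_of]
      linear_combination -ha
    · intro h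
      apply hbc
      have e : ∀ i j, !![a, b; c, a] i j = (1 : Matrix (Fin 2) (Fin 2) F) i j := fun i j =>
        congrFun (congrFun (congrArg Subtype.val h) i) j
      have e01 := e 0 1
      have e10 := e 1 0
      simp at e01 e10
      simp [e01, e10]
    · exact (sq_eq_one_iff_diag _).mpr rfl
end

section
/- Let F be a finite field of characteristic 2 with |F| = Q. Then the number of elements of order 2 in the symplectic group Sp_4(F) (the group of 4×4 matrices over F preserving a fixed nondegenerate alternating bilinear form) equals (Q⁴ − 1)(Q² + 1). -/
/-!
An element `X` with `X ^ 2 = 1` is symplectic iff `X * J` equals `J * Xᵀ`; in characteristic 2 this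
says that `X` has blocks `1 + B, A` over `D, 1 + Bᵀ` with `A = [a b; b c]` and `D = [d e; e f]`
symmetric (`exists_invol`). Writing `B = [p q; r (p + t)]`, the equation `X ^ 2 = 1` becomes
(`invol_sq`)

* `t ^ 2 = a * d + c * f` and `p ^ 2 = q * r + a * d + b * e`, which determine `t` and `p` uniquely
  from the other variables, since squaring is bijective on a finite field of characteristic 2;
* four equations, linear in `(b, e, r, q)` with coefficients in `a, c, d, f, t` (`FiberEqs`).

By `t ^ 2 = a * d + c * f`, that linear system has rank 2 as soon as `(a, c, d, f) ≠ 0`, so it has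
`Q ^ 2` solutions, while all `Q ^ 4` vectors are solutions when `(a, c, d, f) = 0`.
Hence there are `Q ^ 4 + (Q ^ 4 - 1) * Q ^ 2` solutions of `X ^ 2 = 1`, and removing `X = 1` leaves
`(Q ^ 4 - 1) * (Q ^ 2 + 1)`.
-/

open Matrix

/-- The part of the equation `X ^ 2 = 1` that is linear in `z = (b, e, r, q)`; see `invol`. -/
def FiberEqs {F : Type*} [Field F] (t a c d f : F) (z : F × F × F × F) : Prop :=
  t * z.1 + z.2.2.2 * c + z.2.2.1 * a = 0 ∧ t * z.2.1 + z.2.2.2 * d + z.2.2.1 * f = 0 ∧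
    z.2.2.2 * t = a * z.2.1 + z.1 * f ∧ z.2.2.1 * t = z.1 * d + c * z.2.1

/-- Away from `(a, c, d, f) = 0` the linear system has a two-dimensional solution space: if, say,
`a ≠ 0`, then two of the equations express `e` and `r` through `b` and `q`, and the other two follow
from `t ^ 2 = a * d + c * f`. -/
theorem card_fiber {F : Type*} [Field F] [Fintype F] (h2 : (2 : F) = 0) (t a c d f : F)
    (ht : t ^ 2 = a * d + c * f) (h : ¬ (a = 0 ∧ c = 0 ∧ d = 0 ∧ f = 0)) :
    Nat.card {z // FiberEqs t a c d f z} = Fintype.card F ^ 2 := by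
  have key : Nonempty (F × F ≃ {z // FiberEqs t a c d f z}) := by
    by_cases ha : a = 0
    · by_cases hc : c = 0
      · by_cases hd : d = 0
        · have hf : f ≠ 0 := fun hf => h ⟨ha, hc, hd, hf⟩
          refine ⟨⟨fun w => ⟨((w.2 * t + a * w.1) / f, w.1, (t * w.1 + w.2 * d) / f, w.2), ?_⟩,
            fun z => (z.1.2.1, z.1.2.2.2), fun w => rfl, ?_⟩⟩
          · simp only [FiberEqs]; refine ⟨?_, ?_, ?_, ?_⟩ <;> field_simp <;> grind
          · rintro ⟨⟨b, e, r, q⟩, h1, h3, h4, h5⟩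
            refine Subtype.ext ?_
            simp only [Prod.mk.injEq] at *
            refine ⟨?_, trivial, ?_, trivial⟩ <;> field_simp <;> grind
        · refine ⟨⟨fun w => ⟨((w.2 * t + c * w.1) / d, w.1, w.2, (t * w.1 + w.2 * f) / d), ?_⟩,
            fun z => (z.1.2.1, z.1.2.2.1), fun w => rfl, ?_⟩⟩
          · simp only [FiberEqs]; refine ⟨?_, ?_, ?_, ?_⟩ <;> field_simp <;> grind
          · rintro ⟨⟨b, e, r, q⟩, h1, h3, h4, h5⟩
            refine Subtype.ext ?_
            simp only [Prod.mk.injEq] at *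
            refine ⟨?_, trivial, trivial, ?_⟩ <;> field_simp <;> grind
      · refine ⟨⟨fun w => ⟨(w.1, (w.2 * t + w.1 * d) / c, w.2, (t * w.1 + w.2 * a) / c), ?_⟩,
          fun z => (z.1.1, z.1.2.2.1), fun w => rfl, ?_⟩⟩
        · simp only [FiberEqs]; refine ⟨?_, ?_, ?_, ?_⟩ <;> field_simp <;> grind
        · rintro ⟨⟨b, e, r, q⟩, h1, h3, h4, h5⟩
          refine Subtype.ext ?_
          simp only [Prod.mk.injEq] at *
          refine ⟨trivial, ?_, trivial, ?_⟩ <;> field_simp <;> grind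
    · refine ⟨⟨fun w => ⟨(w.1, (w.2 * t + w.1 * f) / a, (t * w.1 + w.2 * c) / a, w.2), ?_⟩,
        fun z => (z.1.1, z.1.2.2.2), fun w => rfl, ?_⟩⟩
      · simp only [FiberEqs]; refine ⟨?_, ?_, ?_, ?_⟩ <;> field_simp <;> grind
      · rintro ⟨⟨b, e, r, q⟩, h1, h3, h4, h5⟩
        refine Subtype.ext ?_
        simp only [Prod.mk.injEq] at *
        refine ⟨trivial, ?_, ?_, trivial⟩ <;> field_simp <;> grind
  obtain ⟨e⟩ := key
  rw [← Nat.card_congr e, Nat.card_prod, Nat.card_eq_fintype_card, sq]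

theorem card_fiber_zero {F : Type*} [Field F] [Fintype F] :
    Nat.card {z // FiberEqs (0 : F) 0 0 0 0 z} = Fintype.card F ^ 4 := by
  rw [Nat.card_congr (Equiv.subtypeUnivEquiv fun z => by simp [FiberEqs])]
  simp only [Fintype.card_prod, Nat.card_eq_fintype_card]
  ring

/-- The general matrix `X` over a field of characteristic 2 with `X * J = J * Xᵀ`. The entry
opposite to `1 + p` is parametrized by the trace `t` of the block `B = [p q; r (p + t)]`. -/
def invol {F : Type*} [Field F] (a b c d e f p q r t : F) :
    Matrix (Fin 2 ⊕ Fin 2) (Fin 2 ⊕ Fin 2) F :=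
  fromBlocks !![1 + p, q; r, 1 + (p + t)] !![a, b; b, c] !![d, e; e, f] !![1 + p, r; q, 1 + (p + t)]

/-- The equations, in the parameters of `invol`, expressing that its square is `1`. -/
def InvolEqs {F : Type*} [Field F] (a b c d e f p q r t : F) : Prop :=
  t ^ 2 = a * d + c * f ∧ FiberEqs t a c d f (b, e, r, q) ∧ p ^ 2 = q * r + a * d + b * e

theorem invol_sq {F : Type*} [Field F] (h2 : (2 : F) = 0) (a b c d e f p q r t : F) :
    invol a b c d e f p q r t * invol a b c d e f p q r t = 1 ↔
      InvolEqs a b c d e f p q r t := by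
  simp only [← Matrix.ext_iff, invol, InvolEqs, FiberEqs, fromBlocks_multiply,
    Sum.forall, Fin.forall_fin_two]
  simp
  constructor
  · rintro ⟨⟨⟨⟨_,_⟩,⟨_,_⟩⟩,⟨⟨_,_⟩,⟨_,_⟩⟩⟩,⟨⟨⟨_,_⟩,⟨_,_⟩⟩,⟨⟨_,_⟩,⟨_,_⟩⟩⟩⟩
    refine ⟨?_, ⟨?_, ?_, ?_, ?_⟩, ?_⟩ <;> grind
  · rintro ⟨_, ⟨_, _, _, _⟩, _⟩
    refine ⟨⟨⟨⟨?_,?_⟩,⟨?_,?_⟩⟩,⟨⟨?_,?_⟩,⟨?_,?_⟩⟩⟩,⟨⟨⟨?_,?_⟩,⟨?_,?_⟩⟩,⟨⟨?_,?_⟩,⟨?_,?_⟩⟩⟩⟩ <;> grind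

theorem invol_mul_J {F : Type*} [Field F] (h2 : (2 : F) = 0) (a b c d e f p q r t : F) :
    invol a b c d e f p q r t * J (Fin 2) F = J (Fin 2) F * (invol a b c d e f p q r t)ᵀ := by
  simp only [← Matrix.ext_iff, invol, J, fromBlocks_multiply, fromBlocks_transpose,
    Sum.forall, Fin.forall_fin_two]
  simp
  grind

theorem mem_of_sq {F : Type*} [Field F] (X : Matrix (Fin 2 ⊕ Fin 2) (Fin 2 ⊕ Fin 2) F)
    (hX : X * X = 1) : X ∈ symplecticGroup (Fin 2) F ↔ X * J (Fin 2) F = J (Fin 2) F * Xᵀ := by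
  have hT : Xᵀ * Xᵀ = 1 := by rw [← transpose_mul, hX, transpose_one]
  rw [SymplecticGroup.mem_iff]
  constructor
  · intro h
    calc X * J (Fin 2) F = X * J (Fin 2) F * (Xᵀ * Xᵀ) := by rw [hT, mul_one]
      _ = J (Fin 2) F * Xᵀ := by rw [← mul_assoc, h]
  · intro h
    rw [h, mul_assoc, hT, mul_one]

theorem exists_invol {F : Type*} [Field F] (h2 : (2 : F) = 0)
    (X : Matrix (Fin 2 ⊕ Fin 2) (Fin 2 ⊕ Fin 2) F)
    (hX : X * J (Fin 2) F = J (Fin 2) F * Xᵀ) :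
    ∃ a b c d e f p q r t, X = invol a b c d e f p q r t := by
  refine ⟨X (.inl 0) (.inr 0), X (.inl 0) (.inr 1), X (.inl 1) (.inr 1),
    X (.inr 0) (.inl 0), X (.inr 0) (.inl 1), X (.inr 1) (.inl 1), X (.inl 0) (.inl 0) - 1,
    X (.inl 0) (.inl 1), X (.inl 1) (.inl 0), X (.inl 1) (.inl 1) - X (.inl 0) (.inl 0), ?_⟩
  simp only [← Matrix.ext_iff, J, Sum.forall, Fin.forall_fin_two, Matrix.mul_apply,
    Fintype.sum_sum_type, Fin.sum_univ_two, invol] at *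
  simp at *
  grind

/-- Including the identity, the solutions of `x ^ 2 = 1` are fibred over `(a, c, d, f)`, the fibre
being the solution space of `FiberEqs`; `σ` is the square root on `F`. -/
theorem card_sq_eq_sum {F : Type*} [Field F] [Fintype F] (h2 : (2 : F) = 0)
    (σ : F → F) (hσ : ∀ x, σ x ^ 2 = x) :
    Nat.card {x : symplecticGroup (Fin 2) F // x ^ 2 = 1} =
      ∑ y : F × F × F × F, Nat.card {z // FiberEqs (σ (y.1 * y.2.2.1 + y.2.1 * y.2.2.2))
        y.1 y.2.1 y.2.2.1 y.2.2.2 z} := by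
  have sq_inj : ∀ x y : F, x ^ 2 = y ^ 2 → x = y := by
    intro x y h
    have h₂ : (x - y) ^ 2 = 0 := by grind
    exact sub_eq_zero.mp (pow_eq_zero_iff two_ne_zero |>.mp h₂)
  rw [← Nat.card_sigma]
  symm
  let m : (Σ y : F × F × F × F, {z // FiberEqs (σ (y.1 * y.2.2.1 + y.2.1 * y.2.2.2))
        y.1 y.2.1 y.2.2.1 y.2.2.2 z}) → Matrix (Fin 2 ⊕ Fin 2) (Fin 2 ⊕ Fin 2) F :=
    fun w => invol w.1.1 w.2.1.1 w.1.2.1 w.1.2.2.1 w.2.1.2.1 w.1.2.2.2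
      (σ (w.2.1.2.2.2 * w.2.1.2.2.1 + w.1.1 * w.1.2.2.1 + w.2.1.1 * w.2.1.2.1))
      w.2.1.2.2.2 w.2.1.2.2.1 (σ (w.1.1 * w.1.2.2.1 + w.1.2.1 * w.1.2.2.2))
  have hm : ∀ w, m w * m w = 1 := fun w =>
    (invol_sq h2 _ _ _ _ _ _ _ _ _ _).2 ⟨hσ _, w.2.2, hσ _⟩
  have hmem : ∀ w, m w ∈ symplecticGroup (Fin 2) F := fun w =>
    (mem_of_sq _ (hm w)).2 (invol_mul_J h2 _ _ _ _ _ _ _ _ _ _)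
  refine Nat.card_congr (Equiv.ofBijective
    (fun w => ⟨⟨m w, hmem w⟩, Subtype.ext (by rw [sq]; exact hm w)⟩) ⟨?_, ?_⟩)
  · rintro ⟨⟨a, c, d, f⟩, ⟨⟨b, e, r, q⟩, h⟩⟩ ⟨⟨a₂, c₂, d₂, f₂⟩, ⟨⟨b₂, e₂, r₂, q₂⟩, h₂⟩⟩ hw
    have hentry : ∀ i j, m _ i j = m _ i j := fun i j => congrArg (fun x => x.1.1 i j) hw
    obtain rfl : a = a₂ := hentry (.inl 0) (.inr 0)
    obtain rfl : b = b₂ := hentry (.inl 0) (.inr 1)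
    obtain rfl : c = c₂ := hentry (.inl 1) (.inr 1)
    obtain rfl : d = d₂ := hentry (.inr 0) (.inl 0)
    obtain rfl : e = e₂ := hentry (.inr 0) (.inl 1)
    obtain rfl : f = f₂ := hentry (.inr 1) (.inl 1)
    obtain rfl : q = q₂ := hentry (.inl 0) (.inl 1)
    obtain rfl : r = r₂ := hentry (.inl 1) (.inl 0)
    rfl
  · rintro ⟨⟨X, hX⟩, hX2⟩
    have hXX : X * X = 1 := by
      have := congrArg Subtype.val hX2
      rwa [sq] at this
    obtain ⟨a, b, c, d, e, f, p, q, r, t, rfl⟩ := exists_invol h2 X ((mem_of_sq X hXX).1 hX)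
    obtain ⟨ht, hz, hp⟩ := (invol_sq h2 _ _ _ _ _ _ _ _ _ _).1 hXX
    obtain rfl : t = σ (a * d + c * f) := sq_inj _ _ (ht.trans (hσ _).symm)
    obtain rfl : p = σ (q * r + a * d + b * e) := sq_inj _ _ (hp.trans (hσ _).symm)
    exact ⟨⟨(a, c, d, f), ⟨(b, e, r, q), hz⟩⟩, rfl⟩

theorem card_sq_eq {F : Type*} [Field F] [Fintype F] (hchar : CharP F 2) :
    Nat.card {x : symplecticGroup (Fin 2) F // x ^ 2 = 1} =
      Fintype.card F ^ 4 + (Fintype.card F ^ 4 - 1) * Fintype.card F ^ 2 := by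
  classical
  have h2 : (2 : F) = 0 := CharTwo.two_eq_zero
  have hsq : ∀ x : F, ∃ y, y ^ 2 = x := fun x => by
    obtain ⟨y, hy⟩ := FiniteField.isSquare_of_char_two (ringChar.eq F 2) x
    exact ⟨y, by rw [hy, sq]⟩
  choose σ hσ using hsq
  have hσ0 : σ 0 = 0 := pow_eq_zero_iff two_ne_zero |>.mp (hσ 0)
  rw [card_sq_eq_sum h2 σ hσ, ← Finset.add_sum_erase _ _ (Finset.mem_univ 0)]
  congr 1
  · simpa [hσ0] using card_fiber_zero (F := F)
  · rw [Finset.sum_congr rfl (g := fun _ => Fintype.card F ^ 2)]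
    · rw [Finset.sum_const, Finset.card_erase_of_mem (Finset.mem_univ _), Finset.card_univ,
        smul_eq_mul]
      congr 2
      simp only [Fintype.card_prod]
      ring
    · rintro ⟨a, c, d, f⟩ hy
      refine card_fiber h2 _ a c d f (hσ _) ?_
      rintro ⟨rfl, rfl, rfl, rfl⟩
      exact Finset.ne_of_mem_erase hy rfl

/-- Let `F` be a finite field of characteristic 2 with `|F| = Q`. Then the number of
elements of order 2 in the symplectic group `Sp₄(F)` (4×4 matrices preserving a
nondegenerate alternating bilinear form) equals `(Q⁴ - 1)(Q² + 1)`. -/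
theorem stmt12 {F : Type*} [Field F] [Fintype F] (hchar : CharP F 2)
    (Q : ℕ) (hQ : Fintype.card F = Q) :
    Nat.card {x : Matrix.symplecticGroup (Fin 2) F // x ≠ 1 ∧ x ^ 2 = 1} =
      (Q ^ 4 - 1) * (Q ^ 2 + 1) := by
  classical
  subst hQ
  have hcard : Nat.card {x : Matrix.symplecticGroup (Fin 2) F // x ≠ 1 ∧ x ^ 2 = 1} =
      Nat.card {x : Matrix.symplecticGroup (Fin 2) F // x ^ 2 = 1} - 1 := by
    have h := Set.ncard_sdiff_singleton_of_mem
      (s := {x : Matrix.symplecticGroup (Fin 2) F | x ^ 2 = 1}) (a := 1) (one_pow 2)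
    rw [← Nat.card_coe_set_eq, ← Nat.card_coe_set_eq] at h
    refine Eq.trans (Nat.card_congr (Equiv.subtypeEquivRight fun x => ?_)) h
    exact and_comm
  rw [hcard, card_sq_eq hchar]
  obtain ⟨n, hn⟩ : ∃ n, Fintype.card F ^ 4 = n + 1 :=
    Nat.exists_eq_succ_of_ne_zero (pow_ne_zero _ Fintype.card_ne_zero)
  rw [hn, Nat.add_sub_cancel, Nat.add_right_comm, Nat.add_sub_cancel]
  ring
end
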